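/- arXiv:1306.4230 — 3 statements merged into one kernel-verified Lean document; each statement's English description precedes it below -/
import Mathlib

section
/- Let R > 0, α > 0, δ > 0 and θ > 0 be real numbers, and set d = α·δ. Then ∫₀^{R^α} (δ/R^d)·y^{δ-1}·(1 - e^{-θ(1+y)}) dy = 1 - (δ·e^{-θ}/(R^d·θ^δ))·γ(δ, R^α·θ). (This is the integral evaluation underlying Proposition 1, the joint fading–path loss CDF F_Z(θ) = 1 - (δ e^{-θ}/(R^d θ^δ))·γ(δ, R^α θ).) -/
open MeasureTheory ProbabilityTheory Real

/-- The lower incomplete gamma function `γ(s, x) = ∫₀ˣ t^(s-1) e^(-t) dt`. -/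
noncomputable def lowerIncompleteGamma (s x : ℝ) : ℝ :=
  ∫ t in (0:ℝ)..x, t ^ (s - 1) * Real.exp (-t)

/-- The integral evaluation underlying Proposition 1 (joint fading–path loss CDF):
`∫₀^{R^α} (δ/R^d) y^{δ-1} (1 - e^{-θ(1+y)}) dy = 1 - (δ e^{-θ}/(R^d θ^δ)) γ(δ, R^α θ)`. -/
theorem stmt_0 (R α δ θ d : ℝ) (hR : 0 < R) (hα : 0 < α) (hδ : 0 < δ) (hθ : 0 < θ)
    (hd : d = α * δ) :
    ∫ y in (0:ℝ)..(R ^ α),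
        (δ / R ^ d) * y ^ (δ - 1) * (1 - Real.exp (-(θ * (1 + y)))) =
      1 - (δ * Real.exp (-θ) / (R ^ d * θ ^ δ)) * lowerIncompleteGamma δ (R ^ α * θ) := by
  have hB : 0 < R ^ α := rpow_pos_of_pos hR α
  have hRd : (R ^ α) ^ δ = R ^ d := by rw [hd, rpow_mul hR.le]
  have hRd0 : R ^ d ≠ 0 := (rpow_pos_of_pos hR d).ne'
  have hθ0 : θ ^ δ ≠ 0 := (rpow_pos_of_pos hθ δ).ne'
  have h1 : IntervalIntegrable (fun y : ℝ => y ^ (δ - 1)) volume 0 (R ^ α) :=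
    intervalIntegral.intervalIntegrable_rpow' (by linarith)
  have h2 : IntervalIntegrable (fun y : ℝ => y ^ (δ - 1) * Real.exp (-(θ * y)))
      volume 0 (R ^ α) :=
    h1.mul_continuousOn (by fun_prop)
  have i1 : ∫ y in (0:ℝ)..(R ^ α), y ^ (δ - 1) = R ^ d / δ := by
    rw [integral_rpow (Or.inl (by linarith))]
    simp [hRd, zero_rpow hδ.ne']
  have i2 : lowerIncompleteGamma δ (R ^ α * θ) =
      θ ^ δ * ∫ y in (0:ℝ)..(R ^ α), y ^ (δ - 1) * Real.exp (-(θ * y)) := by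
    have h := intervalIntegral.mul_integral_comp_mul_left (a := 0) (b := R ^ α)
      (f := fun t : ℝ => t ^ (δ - 1) * Real.exp (-t)) (c := θ)
    unfold lowerIncompleteGamma
    rw [mul_zero, mul_comm θ (R ^ α)] at h
    rw [← h, ← intervalIntegral.integral_const_mul, ← intervalIntegral.integral_const_mul]
    apply intervalIntegral.integral_congr
    intro y hy
    rw [Set.uIcc_of_le hB.le] at hy
    have e : θ ^ δ = θ * θ ^ (δ - 1) := by
      rw [rpow_sub_one hθ.ne']; field_simp
    simp only [mul_rpow hθ.le hy.1, e]
    ring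
  have i3 : ∀ y : ℝ, (δ / R ^ d) * y ^ (δ - 1) * (1 - Real.exp (-(θ * (1 + y)))) =
      (δ / R ^ d) * y ^ (δ - 1) -
        (δ / R ^ d * Real.exp (-θ)) * (y ^ (δ - 1) * Real.exp (-(θ * y))) := by
    intro y
    have : Real.exp (-(θ * (1 + y))) = Real.exp (-θ) * Real.exp (-(θ * y)) := by
      rw [← Real.exp_add]; ring_nf
    rw [this]; ring
  simp_rw [i3]
  rw [intervalIntegral.integral_sub (h1.const_mul _) (h2.const_mul _),
    intervalIntegral.integral_const_mul, intervalIntegral.integral_const_mul, i1, i2]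
  field_simp
end

section
/- Let R > 0, α > 0, δ > 0 be real numbers with d = α·δ, and let θ > 0. Let H be an exponential(1) random variable and let Y be a real-valued random variable, independent of H, whose law has density y ↦ (δ/R^d)·y^{δ-1} on [0, R^α] (and zero elsewhere) with respect to Lebesgue measure. Then P(H < θ·(1+Y)) = 1 - (δ·e^{-θ}/(R^d·θ^δ))·γ(δ, R^α·θ). (Proposition 1: the CDF of the compound fading–path loss variable Z = |h|²/(1+r^α) evaluated at θ.) -/
open MeasureTheory ProbabilityTheory Real

lemma exp_tail (a : ℝ) (ha : 0 ≤ a) :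
    (volume.withDensity fun x =>
        ENNReal.ofReal (Set.indicator (Set.Ici (0:ℝ)) (fun x => Real.exp (-x)) x)) (Set.Ici a)
      = ENNReal.ofReal (Real.exp (-a)) := by
  rw [withDensity_apply _ measurableSet_Ici]
  have h1 : ∫⁻ x in Set.Ici a, ENNReal.ofReal
      (Set.indicator (Set.Ici (0:ℝ)) (fun x => Real.exp (-x)) x)
      = ∫⁻ x in Set.Ici a, ENNReal.ofReal (Real.exp (-x)) := by
    apply setLIntegral_congr_fun measurableSet_Ici
    intro x hx
    have : x ∈ Set.Ici (0:ℝ) := le_trans ha hx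
    simp only [Set.indicator_of_mem this]
  rw [h1, setLIntegral_congr Ioi_ae_eq_Ici.symm,
    ← ofReal_integral_eq_lintegral_ofReal, integral_exp_neg_Ioi]
  · simpa [IntegrableOn] using exp_neg_integrableOn_Ioi a one_pos
  · exact Filter.Eventually.of_forall fun x => (Real.exp_pos _).le

lemma gamma_subst (δ θ B : ℝ) (hθ : 0 < θ) (hB : 0 ≤ B) :
    lowerIncompleteGamma δ (B * θ)
      = θ ^ δ * ∫ y in (0:ℝ)..B, y ^ (δ - 1) * Real.exp (-(θ * y)) := by
  have h := intervalIntegral.integral_comp_mul_left (a := 0) (b := B)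
    (fun t : ℝ => t ^ (δ - 1) * Real.exp (-t)) hθ.ne'
  have h2 : ∫ y in (0:ℝ)..B, (θ * y) ^ (δ - 1) * Real.exp (-(θ * y))
      = θ ^ (δ - 1) * ∫ y in (0:ℝ)..B, y ^ (δ - 1) * Real.exp (-(θ * y)) := by
    rw [← intervalIntegral.integral_const_mul]
    apply intervalIntegral.integral_congr
    intro y hy
    rw [Set.uIcc_of_le hB] at hy
    simp only
    rw [Real.mul_rpow hθ.le hy.1, mul_assoc]
  rw [h2, mul_zero, smul_eq_mul, mul_comm θ B] at h
  unfold lowerIncompleteGamma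
  have h3 : θ ^ δ = θ * θ ^ (δ - 1) := by
    rw [Real.rpow_sub_one hθ.ne']; field_simp
  rw [h3, mul_assoc, h, ← mul_assoc, mul_inv_cancel₀ hθ.ne', one_mul]

lemma integrable_aux (δ θ B : ℝ) (hδ : 0 < δ) :
    IntervalIntegrable (fun y : ℝ => y ^ (δ - 1) * Real.exp (-(θ * y))) volume 0 B := by
  apply (intervalIntegral.intervalIntegrable_rpow' (by linarith)).mul_continuousOn
  fun_prop

/-- Proposition 1: if `H` is exponential(1) and `Y` (independent of `H`) has density
`y ↦ (δ/R^d) y^{δ-1}` on `[0, R^α]`, then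
`P(H < θ(1+Y)) = 1 - (δ e^{-θ}/(R^d θ^δ)) γ(δ, R^α θ)`. -/
theorem stmt_1 {Ω : Type*} [MeasureSpace Ω]
    [IsProbabilityMeasure (ℙ : Measure Ω)]
    (R α δ θ d : ℝ) (hR : 0 < R) (hα : 0 < α) (hδ : 0 < δ) (hθ : 0 < θ)
    (hd : d = α * δ)
    (H Y : Ω → ℝ) (hHm : Measurable H) (hYm : Measurable Y)
    (hHlaw : Measure.map H ℙ =
      volume.withDensity fun x =>
        ENNReal.ofReal (Set.indicator (Set.Ici (0:ℝ)) (fun x => Real.exp (-x)) x))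
    (hYlaw : Measure.map Y ℙ =
      volume.withDensity fun y =>
        ENNReal.ofReal (Set.indicator (Set.Icc (0:ℝ) (R ^ α))
          (fun y => (δ / R ^ d) * y ^ (δ - 1)) y))
    (hindep : IndepFun H Y ℙ) :
    ℙ {ω | H ω < θ * (1 + Y ω)} =
      ENNReal.ofReal
        (1 - (δ * Real.exp (-θ) / (R ^ d * θ ^ δ)) * lowerIncompleteGamma δ (R ^ α * θ)) := by
  have hB : 0 ≤ R ^ α := (Real.rpow_pos_of_pos hR α).le
  have hc : 0 ≤ δ / R ^ d := div_nonneg hδ.le (Real.rpow_pos_of_pos hR d).le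
  have hA := integrable_aux δ θ (R ^ α) hδ
  set A := ∫ y in (0:ℝ)..(R ^ α), y ^ (δ - 1) * Real.exp (-(θ * y)) with hAdef
  have hA0 : 0 ≤ A := by
    apply intervalIntegral.integral_nonneg hB
    intro y hy
    exact mul_nonneg (Real.rpow_nonneg hy.1 _) (Real.exp_pos _).le
  have hval : (δ * Real.exp (-θ) / (R ^ d * θ ^ δ)) * lowerIncompleteGamma δ (R ^ α * θ)
      = (δ / R ^ d * Real.exp (-θ)) * A := by
    rw [gamma_subst δ θ _ hθ hB, ← hAdef]
    have := (Real.rpow_pos_of_pos hR d).ne'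
    have := (Real.rpow_pos_of_pos hθ δ).ne'
    field_simp
  rw [hval]
  have hms : MeasurableSet {p : ℝ × ℝ | θ * (1 + p.1) ≤ p.2} :=
    measurableSet_le (by fun_prop) (by fun_prop)
  have hset : {ω | H ω < θ * (1 + Y ω)}
      = ((fun ω => (Y ω, H ω)) ⁻¹' {p : ℝ × ℝ | θ * (1 + p.1) ≤ p.2})ᶜ := by
    ext ω; simp
  rw [hset, prob_compl_eq_one_sub ((hYm.prodMk hHm) hms),
    ENNReal.ofReal_sub _ (by positivity), ENNReal.ofReal_one]
  congr 1
  rw [← Measure.map_apply (hYm.prodMk hHm) hms,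
    (indepFun_iff_map_prod_eq_prod_map_map hYm.aemeasurable hHm.aemeasurable).1 hindep.symm]
  haveI : IsProbabilityMeasure (Measure.map H ℙ) :=
    Measure.isProbabilityMeasure_map hHm.aemeasurable
  rw [Measure.prod_apply hms]
  have hmeas := measurable_measure_prodMk_left (ν := Measure.map H ℙ) hms
  have hdm : Measurable fun y : ℝ => ENNReal.ofReal (Set.indicator (Set.Icc (0:ℝ) (R ^ α))
          (fun y => (δ / R ^ d) * y ^ (δ - 1)) y) := by
    apply Measurable.ennreal_ofReal
    apply Measurable.indicator _ measurableSet_Icc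
    fun_prop
  rw [hYlaw, lintegral_withDensity_eq_lintegral_mul _ hdm hmeas]
  have hint : ∀ y : ℝ, ((fun y : ℝ => ENNReal.ofReal (Set.indicator (Set.Icc (0:ℝ) (R ^ α))
          (fun y => (δ / R ^ d) * y ^ (δ - 1)) y)) * fun y => (Measure.map H ℙ)
            (Prod.mk y ⁻¹' {p : ℝ × ℝ | θ * (1 + p.1) ≤ p.2})) y
      = Set.indicator (Set.Icc (0:ℝ) (R ^ α)) (fun y => ENNReal.ofReal
          ((δ / R ^ d * Real.exp (-θ)) * (y ^ (δ - 1) * Real.exp (-(θ * y))))) y := by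
    intro y
    by_cases hy : y ∈ Set.Icc (0:ℝ) (R ^ α)
    · simp only [Pi.mul_apply, Set.indicator_of_mem hy]
      have : Prod.mk y ⁻¹' {p : ℝ × ℝ | θ * (1 + p.1) ≤ p.2} = Set.Ici (θ * (1 + y)) := by
        ext; simp
      have hy0 := hy.1
      rw [this, hHlaw, exp_tail _ (by positivity), ← ENNReal.ofReal_mul (by positivity)]
      congr 1
      rw [show -(θ * (1 + y)) = -θ + -(θ * y) by ring, Real.exp_add]
      ring
    · simp only [Pi.mul_apply, Set.indicator_of_notMem hy]
      simp
  rw [lintegral_congr hint, lintegral_indicator measurableSet_Icc,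
    setLIntegral_congr Ioc_ae_eq_Icc.symm, ← ofReal_integral_eq_lintegral_ofReal,
    ← intervalIntegral.integral_of_le hB, intervalIntegral.integral_const_mul]
  · exact (hA.const_mul _).1
  · refine (ae_restrict_iff' measurableSet_Ioc).2 (Filter.Eventually.of_forall fun y hy => ?_)
    have := hy.1.le
    simp only [Pi.zero_apply]
    positivity
end

section
/- Let T ≥ 1 be a natural number and let B > 0 and θ > 0 be real numbers. Then (T·e^{−θ}/B^T) · ∫₀^{B} (B − y)^{T−1}·e^{−θy} dy = e^{−θ}·T! · ( ∑_{i=0}^{T−1} (−1)^i / ((θB)^{i+1}·(T−1−i)!) − (−1)^{T−1}·e^{−θB}/(θB)^T ). (The integral evaluation establishing Proposition 2, with B = R^d.) -/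
open MeasureTheory Real

lemma aux_rec (n : ℕ) (B θ : ℝ) :
    θ * (∫ y in (0:ℝ)..B, (B - y) ^ (n + 1) * Real.exp (-(θ * y))) =
      B ^ (n + 1) - (n + 1) * ∫ y in (0:ℝ)..B, (B - y) ^ n * Real.exp (-(θ * y)) := by
  have hd : ∀ y ∈ Set.uIcc 0 B, HasDerivAt (fun y => (B - y) ^ (n + 1) * Real.exp (-(θ * y)))
      (-((n + 1) * ((B - y) ^ n * Real.exp (-(θ * y)))) -
        θ * ((B - y) ^ (n + 1) * Real.exp (-(θ * y)))) y := by
    intro y _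
    have h1 : HasDerivAt (fun y => (B - y) ^ (n + 1)) (((n + 1 : ℕ) : ℝ) * (B - y) ^ n * (-1)) y := by
      exact ((hasDerivAt_id y).const_sub B).pow (n + 1)
    have h2 : HasDerivAt (fun y => Real.exp (-(θ * y))) (Real.exp (-(θ * y)) * (-(θ * 1))) y :=
      ((hasDerivAt_id y).const_mul θ).neg.exp
    refine (h1.mul h2).congr_deriv ?_
    push_cast
    ring
  have hi := intervalIntegral.integral_eq_sub_of_hasDerivAt hd
    (Continuous.intervalIntegrable (by fun_prop) _ _)
  rw [intervalIntegral.integral_sub (Continuous.intervalIntegrable (by fun_prop) _ _)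
    (Continuous.intervalIntegrable (by fun_prop) _ _), intervalIntegral.integral_neg,
    intervalIntegral.integral_const_mul, intervalIntegral.integral_const_mul] at hi
  simp at hi
  linarith

lemma aux_zero (B θ : ℝ) (hθ : 0 < θ) :
    (∫ y in (0:ℝ)..B, Real.exp (-(θ * y))) = (1 - Real.exp (-(θ * B))) / θ := by
  have hd : ∀ y ∈ Set.uIcc 0 B, HasDerivAt (fun y => -(Real.exp (-(θ * y)) / θ))
      (Real.exp (-(θ * y))) y := by
    intro y _
    have h2 : HasDerivAt (fun y => Real.exp (-(θ * y))) (Real.exp (-(θ * y)) * (-(θ * 1))) y :=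
      ((hasDerivAt_id y).const_mul θ).neg.exp
    refine (h2.div_const θ).neg.congr_deriv ?_
    field_simp
  rw [intervalIntegral.integral_eq_sub_of_hasDerivAt hd
    (Continuous.intervalIntegrable (by fun_prop) _ _)]
  simp
  ring

lemma aux_main (n : ℕ) (B θ : ℝ) (hB : 0 < B) (hθ : 0 < θ) :
    (∫ y in (0:ℝ)..B, (B - y) ^ n * Real.exp (-(θ * y))) =
      B ^ (n + 1) * (n.factorial : ℝ) *
        ((∑ i ∈ Finset.range (n + 1),
            (-1 : ℝ) ^ i / ((θ * B) ^ (i + 1) * ((n - i).factorial : ℝ))) -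
          (-1 : ℝ) ^ n * Real.exp (-(θ * B)) / (θ * B) ^ (n + 1)) := by
  induction n with
  | zero =>
    simp [aux_zero B θ hθ]
    field_simp
  | succ n ih =>
    have hr := aux_rec n B θ
    rw [ih] at hr
    have hs : (∑ i ∈ Finset.range (n + 1 + 1),
          (-1 : ℝ) ^ i / ((θ * B) ^ (i + 1) * ((n + 1 - i).factorial : ℝ))) =
        1 / (θ * B * ((n + 1).factorial : ℝ)) - 1 / (θ * B) * ∑ i ∈ Finset.range (n + 1),
          (-1 : ℝ) ^ i / ((θ * B) ^ (i + 1) * ((n - i).factorial : ℝ)) := by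
      rw [Finset.sum_range_succ', Finset.mul_sum, add_comm, sub_eq_add_neg,
        ← Finset.sum_neg_distrib]
      congr 1
      · simp
      · refine Finset.sum_congr rfl fun i _ => ?_
        rw [Nat.add_sub_add_right]
        have := Nat.factorial_ne_zero (n - i)
        field_simp
        ring
    rw [hs]
    apply mul_left_cancel₀ hθ.ne'
    rw [hr, Nat.factorial_succ]
    have := Nat.factorial_ne_zero n
    generalize (∑ i ∈ Finset.range (n + 1),
          (-1 : ℝ) ^ i / ((θ * B) ^ (i + 1) * ((n - i).factorial : ℝ))) = S
    push_cast
    field_simp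
    ring

/-- The integral evaluation establishing Proposition 2 (with `B = R^d`):
`(T e^{-θ}/B^T) ∫₀^B (B-y)^{T-1} e^{-θy} dy
  = e^{-θ} T! (∑_{i=0}^{T-1} (-1)^i/((θB)^{i+1} (T-1-i)!) - (-1)^{T-1} e^{-θB}/(θB)^T)`. -/
theorem stmt_11 (T : ℕ) (hT : 1 ≤ T) (B θ : ℝ) (hB : 0 < B) (hθ : 0 < θ) :
    ((T : ℝ) * Real.exp (-θ) / B ^ T) *
        ∫ y in (0:ℝ)..B, (B - y) ^ (T - 1) * Real.exp (-(θ * y)) =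
      Real.exp (-θ) * (T.factorial : ℝ) *
        ((∑ i ∈ Finset.range T,
            (-1 : ℝ) ^ i / ((θ * B) ^ (i + 1) * ((T - 1 - i).factorial : ℝ))) -
          (-1 : ℝ) ^ (T - 1) * Real.exp (-(θ * B)) / (θ * B) ^ T) := by
  obtain ⟨n, rfl⟩ : ∃ n, T = n + 1 := ⟨T - 1, by omega⟩
  simp only [Nat.add_sub_cancel]
  rw [aux_main n B θ hB hθ, Nat.factorial_succ]
  generalize (∑ i ∈ Finset.range (n + 1),
          (-1 : ℝ) ^ i / ((θ * B) ^ (i + 1) * ((n - i).factorial : ℝ))) -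
          (-1 : ℝ) ^ n * Real.exp (-(θ * B)) / (θ * B) ^ (n + 1) = S
  push_cast
  field_simp
end
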